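/- The derivation module D(𝒜₂₄₁) of the central hyperplane arrangement 𝒜₂₄₁ in ℂ⁴ with defining equation Q₂₄₁ = x·y·z·w·(x+y+z+w)·(x+y−z−w)·(y−z+w)·(x+z−w) is not a free module over S = ℂ[x,y,z,w]. -/

import Mathlib

open MvPolynomial

noncomputable section

/-- The polynomial ring `S = ℂ[x,y,z,w]`, with `x = X 0`, `y = X 1`, `z = X 2`, `w = X 3`. -/
abbrev S4 : Type := MvPolynomial (Fin 4) ℂ

/-- The linear form `c₀·x + c₁·y + c₂·z + c₃·w` with coefficient vector `c`. -/
noncomputable def linForm (c : Fin 4 → ℂ) : S4 := ∑ i, C (c i) * X i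

/-- A polynomial derivation `θ = a₁∂ₓ + a₂∂_y + a₃∂_z + a₄∂_w` of `S` is identified with
its coefficient tuple `a : Fin 4 → S`; the linear map `derMap f` sends `a` to `θ(f)`. -/
noncomputable def derMap (f : S4) : (Fin 4 → S4) →ₗ[S4] S4 where
  toFun a := ∑ i, a i * pderiv i f
  map_add' a b := by simp [add_mul, Finset.sum_add_distrib]
  map_smul' c a := by simp [Finset.mul_sum, mul_assoc]

/-- The derivation module `D(𝒜)` of the central arrangement whose hyperplanes are the kernels
of the linear forms `linForm (α H)`: all derivations `θ` with `θ(α_H) ∈ S·α_H` for every `H`. -/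
noncomputable def derivModule {ι : Type} (α : ι → (Fin 4 → ℂ)) :
    Submodule S4 (Fin 4 → S4) :=
  ⨅ H, Submodule.comap (derMap (linForm (α H))) (Ideal.span {linForm (α H)})

end

/-- The coefficient vectors of the eight linear factors of Q = xyzw(x+y+z+w)(x+y-z-w)(y-z+w)(x+z-w), defining the rigid Cynk–Szemberg octic arrangement 𝒜₂₄₁ ⊂ ℙ³. -/
noncomputable def A241 : Fin 8 → (Fin 4 → ℂ) :=
  ![![1, 0, 0, 0],
    ![0, 1, 0, 0],
    ![0, 0, 1, 0],
    ![0, 0, 0, 1],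
    ![1, 1, 1, 1],
    ![1, 1, -1, -1],
    ![0, 1, -1, 1],
    ![1, 0, 1, -1]]

/-- Explicit form of the linear forms. -/
theorem linForm_eq (c : Fin 4 → ℂ) :
    linForm c = C (c 0) * X 0 + C (c 1) * X 1 + C (c 2) * X 2 + C (c 3) * X 3 := by
  simp [linForm, Fin.sum_univ_four]

theorem derMap_linForm (c : Fin 4 → ℂ) (a : Fin 4 → S4) :
    derMap (linForm c) a = C (c 0) * a 0 + C (c 1) * a 1 + C (c 2) * a 2 + C (c 3) * a 3 := by
  simp [derMap, linForm_eq, Fin.sum_univ_four, Derivation.leibniz, pderiv_X, Pi.single_apply]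
  ring

theorem mem_derModule_iff {ι : Type} (α : ι → (Fin 4 → ℂ)) (a : Fin 4 → S4) :
    a ∈ derivModule α ↔ ∀ H, linForm (α H) ∣ derMap (linForm (α H)) a := by
  simp [derivModule, Submodule.mem_iInf, Ideal.mem_span_singleton]

theorem mem_A241_iff (a : Fin 4 → S4) :
    a ∈ derivModule A241 ↔
      (X 0 ∣ a 0 ∧ X 1 ∣ a 1 ∧ X 2 ∣ a 2 ∧ X 3 ∣ a 3) ∧
      (X 0 + X 1 + X 2 + X 3 : S4) ∣ a 0 + a 1 + a 2 + a 3 ∧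
      (X 0 + X 1 - X 2 - X 3 : S4) ∣ a 0 + a 1 - a 2 - a 3 ∧
      (X 1 - X 2 + X 3 : S4) ∣ a 1 - a 2 + a 3 ∧
      (X 0 + X 2 - X 3 : S4) ∣ a 0 + a 2 - a 3 := by
  rw [mem_derModule_iff]
  simp only [derMap_linForm]
  simp [Fin.forall_fin_succ, linForm_eq, A241, sub_eq_add_neg, and_assoc]

/-- The product of the forms of `A241` which do not vanish at the point `(1, 0, 0, 0)`. -/
noncomputable def awayProd : S4 :=
  X 0 * (X 0 + X 1 + X 2 + X 3) * (X 0 + X 1 - X 2 - X 3) * (X 0 + X 2 - X 3)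

/-- Multiples of `awayProd` lie in the derivation module as soon as the conditions at the four
hyperplanes through `(1, 0, 0, 0)` hold. -/
theorem awayProd_smul_mem (a : Fin 4 → S4) (h1 : X 1 ∣ a 1) (h2 : X 2 ∣ a 2) (h3 : X 3 ∣ a 3)
    (hs : (X 1 - X 2 + X 3 : S4) ∣ a 1 - a 2 + a 3) :
    awayProd • a ∈ derivModule A241 := by
  rw [mem_A241_iff]
  simp only [Pi.smul_apply, smul_eq_mul, ← mul_add, ← mul_sub]
  refine ⟨⟨?_, h1.mul_left _, h2.mul_left _, h3.mul_left _⟩, ?_, ?_, hs.mul_left _, ?_⟩ <;>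
    refine Dvd.dvd.mul_right ?_ _ <;> unfold awayProd
  · exact ((dvd_mul_right _ _).mul_right _).mul_right _
  · exact ((dvd_mul_left _ _).mul_right _).mul_right _
  · exact (dvd_mul_left _ _).mul_right _
  · exact dvd_mul_left _ _

/-- The point `(1, 0, 0, 0)`. -/
noncomputable def basePoint : Fin 4 → ℂ := ![1, 0, 0, 0]

theorem eval_awayProd : eval basePoint awayProd = 1 := by
  simp [awayProd, basePoint]

theorem awayProd_ne_zero : awayProd ≠ 0 := by
  intro h
  simpa [h] using eval_awayProd

theorem lastForm_ne_zero : (X 1 - X 2 + X 3 : S4) ≠ 0 := by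
  intro h
  simpa using congrArg (eval ![0, 1, 0, 0]) h

theorem not_X_one_dvd_lastForm : ¬ (X 1 : S4) ∣ X 1 - X 2 + X 3 := by
  rintro ⟨c, hc⟩
  simpa using congrArg (eval ![0, 0, 0, 1]) hc

/-- The arrangement `A241` has a derivation module of full rank. -/
theorem finrank_derivModule_A241 : Module.finrank S4 (derivModule A241) = 4 := by
  set q : S4 := awayProd * (X 1 * X 2 * X 3 * (X 1 - X 2 + X 3)) with hq
  have hq0 : q ≠ 0 := by
    simp [hq, awayProd_ne_zero, lastForm_ne_zero, X_ne_zero]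
  have hmem (a : Fin 4 → S4) : LinearMap.lsmul S4 (Fin 4 → S4) q a ∈ derivModule A241 := by
    rw [LinearMap.lsmul_apply, hq, mul_smul]
    apply awayProd_smul_mem <;> simp only [Pi.smul_apply, smul_eq_mul]
    · exact ⟨X 2 * X 3 * (X 1 - X 2 + X 3) * a 1, by ring⟩
    · exact ⟨X 1 * X 3 * (X 1 - X 2 + X 3) * a 2, by ring⟩
    · exact ⟨X 1 * X 2 * (X 1 - X 2 + X 3) * a 3, by ring⟩
    · exact ⟨X 1 * X 2 * X 3 * (a 1 - a 2 + a 3), by ring⟩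
  apply le_antisymm
  · simpa using LinearMap.finrank_le_finrank_of_injective
      (f := (derivModule A241).subtype) (Submodule.subtype_injective _)
  · have hinj : Function.Injective
        ((LinearMap.lsmul S4 (Fin 4 → S4) q).codRestrict (derivModule A241) hmem) := by
      intro a c h
      exact smul_right_injective _ hq0 (congrArg Subtype.val h)
    simpa using LinearMap.finrank_le_finrank_of_injective hinj

/-- The determinant of a basis divides the determinant of any tuple of elements. -/
theorem det_basis_dvd {R : Type*} [CommRing R] {n : Type*} [Fintype n] [DecidableEq n]
    {N : Submodule R (n → R)} (b : Module.Basis n R N) (η : n → n → R) (hη : ∀ i, η i ∈ N) :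
    (Matrix.of fun i => (b i : n → R)).det ∣ (Matrix.of η).det := by
  have h : Matrix.of η = (Matrix.of fun i k => b.repr ⟨η i, hη i⟩ k) *
      Matrix.of fun i => (b i : n → R) := by
    ext i j
    have h := congrArg (fun v : N => (v : n → R) j) (b.sum_repr ⟨η i, hη i⟩)
    simp only [Submodule.coe_sum, Submodule.coe_smul, Finset.sum_apply, Pi.smul_apply,
      smul_eq_mul] at h
    simp only [Matrix.mul_apply, Matrix.of_apply, h]
  rw [h, Matrix.det_mul]
  exact dvd_mul_left _ _

/-- The logarithmic coefficients of an element of the derivation module at the coordinate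
hyperplanes through `(1, 0, 0, 0)` have the same value at that point. -/
theorem exists_coeff_of_mem {a : Fin 4 → S4} (ha : a ∈ derivModule A241) :
    ∃ p q r : S4, a 1 = X 1 * p ∧ a 2 = X 2 * q ∧ a 3 = X 3 * r ∧
      eval basePoint q = eval basePoint p ∧ eval basePoint r = eval basePoint p := by
  obtain ⟨⟨-, ⟨p, hp⟩, ⟨q, hq⟩, ⟨r, hr⟩⟩, -, -, ⟨s, hs⟩, -⟩ := (mem_A241_iff a).1 ha
  refine ⟨p, q, r, hp, hq, hr, ?_⟩
  rw [hp, hq, hr] at hs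
  have e1 := congrArg (fun f => eval basePoint (pderiv 1 f)) hs
  have e2 := congrArg (fun f => eval basePoint (pderiv 2 f)) hs
  have e3 := congrArg (fun f => eval basePoint (pderiv 3 f)) hs
  simp [Derivation.leibniz, pderiv_X, basePoint] at e1 e2 e3
  unfold basePoint
  rw [e1, e2, e3]
  exact ⟨rfl, rfl⟩

/-- If three columns of a matrix agree at a point, its determinant vanishes there to order two. -/
theorem eval_pderiv_det_eq_zero (t p q r : Fin 4 → S4) (P : Fin 4 → ℂ) (j : Fin 4)
    (hq : ∀ i, eval P (q i) = eval P (p i)) (hr : ∀ i, eval P (r i) = eval P (p i)) :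
    eval P (Matrix.of fun i => ![t i, p i, q i, r i]).det = 0 ∧
    eval P (pderiv j (Matrix.of fun i => ![t i, p i, q i, r i]).det) = 0 := by
  have hdet : (Matrix.of fun i => ![t i, p i, q i, r i]).det =
      (Matrix.of fun i => ![t i, p i, q i - p i, r i - p i]).det := by
    simp [Matrix.det_succ_row_zero, Fin.sum_univ_succ, Fin.succAbove]
    ring
  rw [hdet]
  simp [Matrix.det_succ_row_zero, Fin.sum_univ_succ, Fin.succAbove, Derivation.leibniz, hq, hr]

theorem det_mul_columns (t p q r : Fin 4 → S4) :
    (Matrix.of fun i => ![t i, X 1 * p i, X 2 * q i, X 3 * r i]).det =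
      X 1 * X 2 * X 3 * (Matrix.of fun i => ![t i, p i, q i, r i]).det := by
  simp [Matrix.det_succ_row_zero, Fin.sum_univ_succ, Fin.succAbove]
  ring

/-- The derivation module of 𝒜₂₄₁ is not a free `S`-module. -/
theorem not_free_A241 : ¬ Module.Free S4 ↥(derivModule A241) := by
  intro hfree
  let b : Module.Basis (Fin 4) S4 (derivModule A241) :=
    Module.finBasisOfFinrankEq S4 _ finrank_derivModule_A241
  choose p q r h1 h2 h3 hq hr using fun i => exists_coeff_of_mem (b i).2
  set N : S4 := (Matrix.of fun i => ![(b i).1 0, p i, q i, r i]).det with hN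
  have hM : (Matrix.of fun i => (b i : Fin 4 → S4)).det = X 1 * X 2 * X 3 * N := by
    rw [hN, ← det_mul_columns]
    congr 1
    ext1 i j
    fin_cases j <;> simp [h1, h2, h3]
  set s : S4 := X 1 - X 2 + X 3 with hs
  obtain ⟨U, hU⟩ := det_basis_dvd b
    ![awayProd • ![1, 0, 0, 0], awayProd • ![0, X 1, X 2, X 3],
      awayProd • ![0, X 1 * s, 0, 0], awayProd • ![0, 0, X 2 * s, 0]] (by
      intro i
      fin_cases i <;> refine awayProd_smul_mem _ ?_ ?_ ?_ ?_ <;> simp [hs])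
  obtain ⟨V, hV⟩ := det_basis_dvd b
    ![awayProd • ![1, 0, 0, 0], awayProd • ![0, X 1, X 2, X 3],
      awayProd • ![0, X 1 * X 2, X 1 * X 2, 0], awayProd • ![0, -(X 1 * X 3), 0, X 1 * X 3]] (by
      intro i
      fin_cases i <;> refine awayProd_smul_mem _ ?_ ?_ ?_ ?_ <;> simp)
  rw [hM] at hU hV
  have hX : (X 1 * X 2 * X 3 : S4) ≠ 0 := by simp [X_ne_zero]
  have hU' : awayProd ^ 4 * s ^ 2 = N * U := by
    apply mul_left_cancel₀ hX
    rw [← mul_assoc _ N, ← hU]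
    simp [Matrix.det_succ_row_zero, Fin.sum_univ_succ, Fin.succAbove]
    ring
  have hV' : awayProd ^ 4 * s * X 1 = N * V := by
    apply mul_left_cancel₀ hX
    rw [← mul_assoc _ N, ← hV]
    simp [Matrix.det_succ_row_zero, Fin.sum_univ_succ, Fin.succAbove]
    rw [hs]
    ring
  have hN0 : N ≠ 0 := by
    rintro h
    rw [h, zero_mul] at hU'
    simp [awayProd_ne_zero, hs, lastForm_ne_zero] at hU'
  have hUV : X 1 * U = s * V := by
    apply mul_left_cancel₀ hN0
    linear_combination s * hV' - X 1 * hU'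
  obtain ⟨W, rfl⟩ : X 1 ∣ V := by
    have hprime : Prime (X 1 : S4) := X_prime
    exact (hprime.dvd_or_dvd (Dvd.intro _ hUV)).resolve_left not_X_one_dvd_lastForm
  have hW : awayProd ^ 4 * s = N * W := by
    apply mul_right_cancel₀ (X_ne_zero (R := ℂ) (1 : Fin 4))
    rw [hV']
    ring
  obtain ⟨hN1, hN2⟩ := eval_pderiv_det_eq_zero (fun i => (b i).1 0) p q r basePoint 1 hq hr
  have key := congrArg (fun f => eval basePoint (pderiv 1 f)) hW
  have hs0 : eval basePoint s = 0 := by simp [hs, basePoint]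
  have hs1 : pderiv 1 s = 1 := by simp [hs, pderiv_X]
  rw [← hN] at hN1 hN2
  simp [Derivation.leibniz, hN1, hN2, hs0, hs1, eval_awayProd] at key
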